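/- arXiv:2601.15639 — 2 statements merged into one kernel-verified Lean document; each statement's English description precedes it below -/
import Mathlib

section
/- Let f : [0,∞) → ℝ be convex with f(1) = 0 and let G : [0,∞) → [0,∞) be increasing, convex, with G(0) = 0. Let A, X, Y, B be finite sets and suppose A → X → Y → B forms a Markov chain, i.e. the joint pmf factorizes as p(a,x,y,b) = p_A(a) p_{X|A}(x|a) p_{Y|X}(y|x) p_{B|Y}(b|y). Then I_{G,f}(p_A, p_{B|A}) ≤ I_{G,f}(p_X, p_{Y|X}), where p_X is the marginal of X and p_{B|A} is the induced channel from A to B. -/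
open scoped BigOperators

/-- A probability mass function on a finite type: nonnegative and summing to 1. -/
def IsPMF {X : Type*} [Fintype X] (p : X → ℝ) : Prop :=
  (∀ x, 0 ≤ p x) ∧ ∑ x, p x = 1

/-- Absolute continuity `p ≪ q`: `q x = 0` implies `p x = 0`. -/
def AbsCont {X : Type*} (p q : X → ℝ) : Prop :=
  ∀ x, q x = 0 → p x = 0

/-- The f-divergence `D_f(p‖q) = ∑_{x : q(x) > 0} q(x) f(p(x)/q(x))`. -/
noncomputable def fDiv {X : Type*} [Fintype X] (f : ℝ → ℝ) (p q : X → ℝ) : ℝ :=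
  ∑ x, if 0 < q x then q x * f (p x / q x) else 0

/-- The `(G,f)`-information `I_{G,f}(p_X, p_{Y|X})`: the infimum over output pmfs
`q_Y` (with `p_{Y|X=x} ≪ q_Y` for all `x`) of `∑_x p_X x • G (D_f(p_{Y|X=x}‖q_Y))`. -/
noncomputable def Igf {X Y : Type*} [Fintype X] [Fintype Y]
    (G f : ℝ → ℝ) (pX : X → ℝ) (W : X → Y → ℝ) : ℝ :=
  sInf {v : ℝ | ∃ qY : Y → ℝ, IsPMF qY ∧ (∀ x, AbsCont (W x) qY) ∧
    v = ∑ x, pX x * G (fDiv f (W x) qY)}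

/-! A candidate output pmf `q` for the channel `W` from `X` to `Y` is pushed through the channel
from `Y` to `B`; by the perspective form of Jensen's inequality this does not increase any
divergence `D_f(W x‖q)`. Precomposing with a channel from `A` to `X` keeps the candidate
`q` and replaces the rows of `W` by mixtures of them, so convexity of `D_f(·‖q)` and of `G`, with
`G` monotone, suffices. -/

section

variable {A X Y B ι : Type*} {f G : ℝ → ℝ}

theorem sum_mul_map_sum_div_sum_le (hf : ConvexOn ℝ (Set.Ici 0) f) {s : Finset ι} {u v : ι → ℝ}
    (hu : ∀ i ∈ s, 0 ≤ u i) (hv : ∀ i ∈ s, 0 ≤ v i) (huv : ∀ i ∈ s, v i = 0 → u i = 0) :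
    (∑ i ∈ s, v i) * f ((∑ i ∈ s, u i) / ∑ i ∈ s, v i) ≤ ∑ i ∈ s, v i * f (u i / v i) := by
  rcases (Finset.sum_nonneg hv).eq_or_lt' with hzero | hpos
  · have hv0 : ∀ i ∈ s, v i = 0 := (Finset.sum_eq_zero_iff_of_nonneg hv).1 hzero
    rw [hzero, zero_mul]
    exact (Finset.sum_eq_zero fun i hi => by rw [hv0 i hi, zero_mul]).ge
  · have jensen := hf.map_centerMass_le hv hpos
      (p := fun i => u i / v i) fun i hi => div_nonneg (hu i hi) (hv i hi)
    have sum_weights : ∑ i ∈ s, v i * (u i / v i) = ∑ i ∈ s, u i :=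
      Finset.sum_congr rfl fun i hi => mul_div_cancel_of_imp' (huv i hi)
    simp only [Finset.centerMass, smul_eq_mul, Function.comp_apply, inv_mul_eq_div,
      sum_weights] at jensen
    rwa [le_div_iff₀' hpos] at jensen

/-- The distribution `∑ x, p x K(· | x)` of the output of the channel `K` when its input has
distribution `p`. The composition of a channel `W` with `K` is encoded as
`fun x => outputDist (W x) K`. -/
def outputDist [Fintype X] (p : X → ℝ) (K : X → Y → ℝ) (y : Y) : ℝ :=
  ∑ x, p x * K x y

theorem IsPMF.nonempty [Fintype X] {p : X → ℝ} (hp : IsPMF p) : Nonempty X := by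
  obtain ⟨x, -, -⟩ := Finset.exists_ne_zero_of_sum_ne_zero (hp.2.trans_ne one_ne_zero)
  exact ⟨x⟩

theorem isPMF_uniform [Fintype X] [Nonempty X] : IsPMF fun _ : X => (Fintype.card X : ℝ)⁻¹ :=
  ⟨fun _ => by positivity, by simp⟩

theorem IsPMF.outputDist [Fintype X] [Fintype Y] {p : X → ℝ} {K : X → Y → ℝ} (hp : IsPMF p)
    (hK : ∀ x, IsPMF (K x)) : IsPMF (outputDist p K) := by
  refine ⟨fun y => Finset.sum_nonneg fun x _ => mul_nonneg (hp.1 x) ((hK x).1 y), ?_⟩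
  simp only [_root_.outputDist]
  rw [Finset.sum_comm]
  simp only [← Finset.mul_sum, (hK _).2, mul_one, hp.2]

theorem AbsCont.outputDist [Fintype X] {p q : X → ℝ} {K : X → Y → ℝ} (hpq : AbsCont p q)
    (hq : ∀ x, 0 ≤ q x) (hK : ∀ x y, 0 ≤ K x y) :
    AbsCont (outputDist p K) (outputDist q K) := by
  intro y hy
  have terms_zero := (Finset.sum_eq_zero_iff_of_nonneg
    fun x _ => mul_nonneg (hq x) (hK x y)).1 hy
  refine Finset.sum_eq_zero fun x hx => mul_eq_zero.2 ?_
  exact (mul_eq_zero.1 (terms_zero x hx)).imp_left (hpq x)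

theorem fDiv_eq_sum [Fintype X] {q : X → ℝ} (hq : ∀ x, 0 ≤ q x) (f : ℝ → ℝ) (p : X → ℝ) :
    fDiv f p q = ∑ x, q x * f (p x / q x) := by
  refine Finset.sum_congr rfl fun x _ => ?_
  rcases (hq x).eq_or_lt' with hzero | hpos
  · simp [hzero]
  · exact if_pos hpos

theorem map_one_le_fDiv [Fintype X] (hf : ConvexOn ℝ (Set.Ici 0) f) {p q : X → ℝ}
    (hp : IsPMF p) (hq : IsPMF q) (hpq : AbsCont p q) : f 1 ≤ fDiv f p q := by
  have h := sum_mul_map_sum_div_sum_le hf (s := Finset.univ)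
    (fun x _ => hp.1 x) (fun x _ => hq.1 x) (fun x _ => hpq x)
  rwa [hp.2, hq.2, div_one, one_mul, ← fDiv_eq_sum hq.1] at h

theorem fDiv_outputDist_le_fDiv [Fintype X] [Fintype Y] (hf : ConvexOn ℝ (Set.Ici 0) f)
    {p q : X → ℝ} (hp : ∀ x, 0 ≤ p x) (hq : ∀ x, 0 ≤ q x) (hpq : AbsCont p q)
    {K : X → Y → ℝ} (hK : ∀ x, IsPMF (K x)) :
    fDiv f (outputDist p K) (outputDist q K) ≤ fDiv f p q := by
  have hqK : ∀ y, 0 ≤ outputDist q K y := fun y =>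
    Finset.sum_nonneg fun x _ => mul_nonneg (hq x) ((hK x).1 y)
  have cancel_kernel : ∀ x y,
      q x * K x y * f (p x * K x y / (q x * K x y)) = q x * f (p x / q x) * K x y := by
    intro x y
    rcases eq_or_ne (K x y) 0 with hzero | hne
    · simp only [hzero, mul_zero, zero_mul]
    · rw [mul_div_mul_right _ _ hne, mul_right_comm]
  rw [fDiv_eq_sum hqK, fDiv_eq_sum hq]
  calc ∑ y, outputDist q K y * f (outputDist p K y / outputDist q K y)
      ≤ ∑ y, ∑ x, q x * K x y * f (p x * K x y / (q x * K x y)) :=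
        Finset.sum_le_sum fun y _ => sum_mul_map_sum_div_sum_le hf
          (fun x _ => mul_nonneg (hp x) ((hK x).1 y)) (fun x _ => mul_nonneg (hq x) ((hK x).1 y))
          (fun x _ h => mul_eq_zero.2 ((mul_eq_zero.1 h).imp_left (hpq x)))
    _ = ∑ x, q x * f (p x / q x) := by
        rw [Finset.sum_comm]
        simp only [cancel_kernel, ← Finset.mul_sum, (hK _).2, mul_one]

theorem fDiv_outputDist_le_sum [Fintype X] [Fintype Y] (hf : ConvexOn ℝ (Set.Ici 0) f)
    {p : X → ℝ} (hp : IsPMF p) {W : X → Y → ℝ} (hW : ∀ x y, 0 ≤ W x y)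
    {q : Y → ℝ} (hq : ∀ y, 0 ≤ q y) :
    fDiv f (outputDist p W) q ≤ ∑ x, p x * fDiv f (W x) q := by
  have jensen : ∀ y, f (outputDist p W y / q y) ≤ ∑ x, p x * f (W x y / q y) := by
    intro y
    have h := hf.map_sum_le (fun x _ => hp.1 x) hp.2
      fun x _ => div_nonneg (hW x y) (hq y)
    simpa only [outputDist, Finset.sum_div, mul_div_assoc, smul_eq_mul] using h
  simp only [fDiv_eq_sum hq]
  calc ∑ y, q y * f (outputDist p W y / q y)
      ≤ ∑ y, q y * ∑ x, p x * f (W x y / q y) :=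
        Finset.sum_le_sum fun y _ => mul_le_mul_of_nonneg_left (jensen y) (hq y)
    _ = ∑ x, p x * ∑ y, q y * f (W x y / q y) := by
        simp only [Finset.mul_sum, mul_left_comm]
        exact Finset.sum_comm

theorem Igf_le [Fintype X] [Fintype Y] (hf : ConvexOn ℝ (Set.Ici 0) f)
    (hG : MonotoneOn G (Set.Ici (f 1))) {p : X → ℝ} (hp : ∀ x, 0 ≤ p x) {W : X → Y → ℝ}
    (hW : ∀ x, IsPMF (W x)) {q : Y → ℝ} (hq : IsPMF q) (hWq : ∀ x, AbsCont (W x) q) :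
    Igf G f p W ≤ ∑ x, p x * G (fDiv f (W x) q) := by
  refine csInf_le ⟨∑ x, p x * G (f 1), ?_⟩ ⟨q, hq, hWq, rfl⟩
  rintro _ ⟨r, hr, hWr, rfl⟩
  refine Finset.sum_le_sum fun x _ => mul_le_mul_of_nonneg_left ?_ (hp x)
  have hle := map_one_le_fDiv hf (hW x) hr (hWr x)
  exact hG Set.self_mem_Ici hle hle

theorem le_Igf [Fintype X] [Fintype Y] [Nonempty Y] {p : X → ℝ} {W : X → Y → ℝ} {b : ℝ}
    (h : ∀ q, IsPMF q → (∀ x, AbsCont (W x) q) → b ≤ ∑ x, p x * G (fDiv f (W x) q)) :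
    b ≤ Igf G f p W := by
  refine le_csInf ⟨_, _, isPMF_uniform, fun x y hy => absurd hy (by positivity), rfl⟩ ?_
  rintro _ ⟨q, hq, hWq, rfl⟩
  exact h q hq hWq

theorem Igf_comp_le_Igf [Fintype X] [Fintype Y] [Fintype B] (hf : ConvexOn ℝ (Set.Ici 0) f)
    (hG : MonotoneOn G (Set.Ici (f 1))) {p : X → ℝ} (hp : IsPMF p) {W : X → Y → ℝ}
    (hW : ∀ x, IsPMF (W x)) {K : Y → B → ℝ} (hK : ∀ y, IsPMF (K y)) :
    Igf G f p (fun x => outputDist (W x) K) ≤ Igf G f p W := by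
  obtain ⟨x₀⟩ := hp.nonempty
  have : Nonempty Y := (hW x₀).nonempty
  refine le_Igf fun q hq hWq => ?_
  have hWK : ∀ x, IsPMF (outputDist (W x) K) := fun x => (hW x).outputDist hK
  have hqK : IsPMF (outputDist q K) := hq.outputDist hK
  have hWqK : ∀ x, AbsCont (outputDist (W x) K) (outputDist q K) := fun x =>
    (hWq x).outputDist hq.1 fun y => (hK y).1
  refine (Igf_le hf hG hp.1 hWK hqK hWqK).trans ?_
  refine Finset.sum_le_sum fun x _ => mul_le_mul_of_nonneg_left ?_ (hp.1 x)
  exact hG (map_one_le_fDiv hf (hWK x) hqK (hWqK x)) (map_one_le_fDiv hf (hW x) hq (hWq x))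
    (fDiv_outputDist_le_fDiv hf (hW x).1 hq.1 (hWq x) hK)

theorem Igf_comp_le_Igf_outputDist [Fintype A] [Fintype X] [Fintype Y]
    (hf : ConvexOn ℝ (Set.Ici 0) f) (hGmono : MonotoneOn G (Set.Ici (f 1)))
    (hGconv : ConvexOn ℝ (Set.Ici (f 1)) G) {p : A → ℝ} (hp : IsPMF p) {K : A → X → ℝ}
    (hK : ∀ a, IsPMF (K a)) {W : X → Y → ℝ} (hW : ∀ x, IsPMF (W x)) :
    Igf G f p (fun a => outputDist (K a) W) ≤ Igf G f (outputDist p K) W := by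
  obtain ⟨x₀⟩ := (hp.outputDist hK).nonempty
  have : Nonempty Y := (hW x₀).nonempty
  refine le_Igf fun q hq hWq => ?_
  have hKW : ∀ a, IsPMF (outputDist (K a) W) := fun a => (hK a).outputDist hW
  have hKWq : ∀ a, AbsCont (outputDist (K a) W) q := fun a y hy =>
    Finset.sum_eq_zero fun x _ => by rw [hWq x y hy, mul_zero]
  have row_le : ∀ a,
      G (fDiv f (outputDist (K a) W) q) ≤ ∑ x, K a x * G (fDiv f (W x) q) := by
    intro a
    have hle_mix := map_one_le_fDiv hf (hKW a) hq (hKWq a)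
    have hmix := fDiv_outputDist_le_sum hf (hK a) (fun x => (hW x).1) hq.1
    calc G (fDiv f (outputDist (K a) W) q)
        ≤ G (∑ x, K a x * fDiv f (W x) q) := hGmono hle_mix (hle_mix.trans hmix) hmix
      _ ≤ ∑ x, K a x * G (fDiv f (W x) q) :=
          hGconv.map_sum_le (fun x _ => (hK a).1 x) (hK a).2
            fun x _ => map_one_le_fDiv hf (hW x) hq (hWq x)
  calc Igf G f p (fun a => outputDist (K a) W)
      ≤ ∑ a, p a * G (fDiv f (outputDist (K a) W) q) := Igf_le hf hGmono hp.1 hKW hq hKWq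
    _ ≤ ∑ a, p a * ∑ x, K a x * G (fDiv f (W x) q) :=
        Finset.sum_le_sum fun a _ => mul_le_mul_of_nonneg_left (row_le a) (hp.1 a)
    _ = ∑ x, outputDist p K x * G (fDiv f (W x) q) := by
        simp only [outputDist, Finset.mul_sum, Finset.sum_mul, mul_assoc]
        exact Finset.sum_comm

end

theorem Igf_four_node_data_processing_general
    {A X Y B : Type*} [Fintype A] [Fintype X] [Fintype Y] [Fintype B]
    (G f : ℝ → ℝ) (hf : ConvexOn ℝ (Set.Ici 0) f)
    (hGmono : MonotoneOn G (Set.Ici (f 1))) (hGconv : ConvexOn ℝ (Set.Ici (f 1)) G)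
    (pA : A → ℝ) (hpA : IsPMF pA)
    (pXA : A → X → ℝ) (hpXA : ∀ a, IsPMF (pXA a))
    (W : X → Y → ℝ) (hW : ∀ x, IsPMF (W x))
    (pBY : Y → B → ℝ) (hpBY : ∀ y, IsPMF (pBY y)) :
    Igf G f pA (fun a b => ∑ x, ∑ y, pXA a x * W x y * pBY y b) ≤
      Igf G f (fun x => ∑ a, pA a * pXA a x) W := by
  have channel_eq : (fun a b => ∑ x, ∑ y, pXA a x * W x y * pBY y b) =
      fun a => outputDist (pXA a) fun x => outputDist (W x) pBY := by
    funext a b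
    simp only [outputDist, Finset.mul_sum, mul_assoc]
  calc Igf G f pA (fun a b => ∑ x, ∑ y, pXA a x * W x y * pBY y b)
      = Igf G f pA (fun a => outputDist (pXA a) fun x => outputDist (W x) pBY) := by
        rw [channel_eq]
    _ ≤ Igf G f (outputDist pA pXA) (fun x => outputDist (W x) pBY) :=
        Igf_comp_le_Igf_outputDist hf hGmono hGconv hpA hpXA fun x => (hW x).outputDist hpBY
    _ ≤ Igf G f (outputDist pA pXA) W := Igf_comp_le_Igf hf hGmono (hpA.outputDist hpXA) hW hpBY

/-- Four-node data processing: if `A → X → Y → B` is a Markov chain, `f` is convex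
with `f 1 = 0`, and `G : [0,∞) → [0,∞)` is increasing and convex with `G 0 = 0`,
then `I_{G,f}(A;B) ≤ I_{G,f}(X;Y)`. -/
theorem Igf_four_node_data_processing
    {A X Y B : Type*} [Fintype A] [Fintype X] [Fintype Y] [Fintype B]
    (G f : ℝ → ℝ)
    (hf : ConvexOn ℝ (Set.Ici 0) f) (hf1 : f 1 = 0)
    (hGmono : StrictMonoOn G (Set.Ici 0)) (hGconv : ConvexOn ℝ (Set.Ici 0) G)
    (hG0 : G 0 = 0) (hGnonneg : ∀ x ∈ Set.Ici (0 : ℝ), 0 ≤ G x)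
    (pA : A → ℝ) (hpA : IsPMF pA)
    (pXA : A → X → ℝ) (hpXA : ∀ a, IsPMF (pXA a))
    (W : X → Y → ℝ) (hW : ∀ x, IsPMF (W x))
    (pBY : Y → B → ℝ) (hpBY : ∀ y, IsPMF (pBY y)) :
    Igf G f pA (fun a b => ∑ x, ∑ y, pXA a x * W x y * pBY y b) ≤
      Igf G f (fun x => ∑ a, pA a * pXA a x) W :=
  Igf_four_node_data_processing_general G f hf (hf1 ▸ hGmono.monotoneOn) (hf1 ▸ hGconv)
    pA hpA pXA hpXA W hW pBY hpBY
end

section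
/- Let ν ∈ (0,∞], let G : [0,ν) → [0,∞) be an increasing function with G(0) = 0 whose range is all of [0,∞), and assume that for every c > 0 the function x ↦ G⁻¹(G(x) + G(c)) is concave on [0,ν). Let f : [0,∞) → ℝ be convex with f(1) = 0 and D_m(f) ≤ ν. If the subadditivity inequality G(D_f(q_Y⊗q_Z‖r_Y⊗r_Z)) ≤ G(D_f(q_Y‖r_Y)) + G(D_f(q_Z‖r_Z)) holds for all pmfs q_Y ≪ r_Y and q_Z ≪ r_Z on two-element alphabets, then it holds for all pmfs q_Y ≪ r_Y and q_Z ≪ r_Z on arbitrary finite alphabets 𝒴 and 𝒵. -/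
open scoped BigOperators

/-- `D_m(f) = f 0 + lim_{t→∞} f t / t`, as an extended real.  For a convex `f`
with `f 1 = 0` the limit equals the supremum of the slopes `f t / (t-1)` over `t > 1`. -/
noncomputable def Dm (f : ℝ → ℝ) : EReal :=
  (f 0 : EReal) + ⨆ t : {t : ℝ // 1 < t}, ((f t.1 / (t.1 - 1) : ℝ) : EReal)

/-!
A finitely supported law on the line with mean `m` is a mixture of laws with the same mean, each
supported on at most two points.  Under `r_Y` the likelihood ratio `q_Y / r_Y` has mean `1`, and
both `D_f(q_Y‖r_Y)` and `D_f(q_Y⊗q_Z‖r_Y⊗r_Z)` are linear functionals of its law.  The pair they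
form is thus a convex combination of pairs coming from a binary `Y`.  Subadditivity says that this
pair lies on or below the graph of `x ↦ G⁻¹(G x + G(D_f(q_Z‖r_Z)))`, whose hypograph is convex, so
the binary case of `Y` implies the general one.  The two alphabets are treated in turn, and
`D_m(f) ≤ ν` keeps every divergence inside the domain of `G`.
-/

section TwoPoint

open Finset

variable {𝕜 V ι : Type*}

theorem sum_product_smul_add_smul {κ : Type*} [Semiring 𝕜] [AddCommMonoid V] [Module 𝕜 V]
    (s : Finset ι) (t : Finset κ) (a : ι → 𝕜) (b : κ → 𝕜) (u : ι → V) (v : κ → V) :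
    ∑ p ∈ s ×ˢ t, (b p.2 • u p.1 + a p.1 • v p.2) =
      (∑ j ∈ t, b j) • ∑ i ∈ s, u i + (∑ i ∈ s, a i) • ∑ j ∈ t, v j := by
  rw [sum_add_distrib, sum_product_right, sum_product]
  simp only [← smul_sum, ← sum_smul]

variable {t : Finset ι} {w x : ι → 𝕜} {m : 𝕜}

theorem sum_filter_not_mul_sub [CommRing 𝕜] (P : ι → Prop) [DecidablePred P]
    (hw : ∑ i ∈ t, w i = 1) (hm : ∑ i ∈ t, w i * x i = m) :
    ∑ i ∈ t with ¬P i, w i * (m - x i) = ∑ i ∈ t with P i, w i * (x i - m) := by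
  have hcentered : ∑ i ∈ t, w i * (x i - m) = 0 := by
    simp only [mul_sub, sum_sub_distrib, ← sum_mul, hw, hm, one_mul, sub_self]
  rw [← sum_filter_add_sum_filter_not t P] at hcentered
  rw [eq_comm, ← sub_eq_zero, ← hcentered, sub_eq_add_neg, ← sum_neg_distrib]
  simp only [← mul_neg, neg_sub]

theorem sum_product_filter_smul [CommRing 𝕜] [AddCommGroup V] [Module 𝕜 V] (P : ι → Prop)
    [DecidablePred P] (hw : ∑ i ∈ t, w i = 1) (hm : ∑ i ∈ t, w i * x i = m) (v : ι → V) :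
    ∑ p ∈ {i ∈ t | P i} ×ˢ {i ∈ t | ¬P i},
        ((w p.2 * (m - x p.2)) • w p.1 • v p.1 + (w p.1 * (x p.1 - m)) • w p.2 • v p.2) =
      (∑ i ∈ t with P i, w i * (x i - m)) • ∑ i ∈ t, w i • v i := by
  rw [sum_product_smul_add_smul _ _ (fun i ↦ w i * (x i - m)) (fun j ↦ w j * (m - x j))
    (fun i ↦ w i • v i) (fun j ↦ w j • v j), sum_filter_not_mul_sub P hw hm, ← smul_add,
    sum_filter_add_sum_filter_not]

theorem sum_product_filter_mul_sub [CommRing 𝕜] (P : ι → Prop) [DecidablePred P]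
    (hw : ∑ i ∈ t, w i = 1) (hm : ∑ i ∈ t, w i * x i = m) :
    ∑ p ∈ {i ∈ t | P i} ×ˢ {i ∈ t | ¬P i}, w p.1 * w p.2 * (x p.1 - x p.2) =
      ∑ i ∈ t with P i, w i * (x i - m) := by
  have hsum := sum_product_filter_smul P hw hm (fun _ ↦ (1 : 𝕜))
  simp only [smul_eq_mul, mul_one, hw] at hsum
  rw [← hsum]
  exact sum_congr rfl fun p _ ↦ by ring

theorem mul_sub_eq_zero_of_sum_filter_eq_zero [CommRing 𝕜] [LinearOrder 𝕜]
    [IsStrictOrderedRing 𝕜] (hw₀ : ∀ i ∈ t, 0 ≤ w i) (hw : ∑ i ∈ t, w i = 1)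
    (hm : ∑ i ∈ t, w i * x i = m) (hzero : ∑ i ∈ t with m < x i, w i * (x i - m) = 0) :
    ∀ i ∈ t, w i * (x i - m) = 0 := by
  intro i hi
  have hzero' := (sum_filter_not_mul_sub (m < x ·) hw hm).trans hzero
  rw [sum_eq_zero_iff_of_nonneg] at hzero hzero'
  · by_cases hlt : m < x i
    · exact hzero i (mem_filter.2 ⟨hi, hlt⟩)
    · rw [← neg_sub, mul_neg, hzero' i (mem_filter.2 ⟨hi, hlt⟩), neg_zero]
  all_goals
    simp only [mem_filter, not_lt]
    exact fun j hj ↦ mul_nonneg (hw₀ j hj.1) (by linarith [hj.2])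

variable [Field 𝕜] [LinearOrder 𝕜] [IsStrictOrderedRing 𝕜] [AddCommGroup V] [Module 𝕜 V]

/-- Each point `x i` above the mean is paired with each point `x j` not above it: the two-point law
on `{x i, x j}` with mean `m` gets a weight proportional to `w i * w j * (x i - x j)`. -/
theorem sum_smul_eq_centerMass_two_point (hw : ∑ i ∈ t, w i = 1)
    (hm : ∑ i ∈ t, w i * x i = m) (hpos : 0 < ∑ i ∈ t with m < x i, w i * (x i - m))
    (v : ι → V) :
    ∑ i ∈ t, w i • v i = ({i ∈ t | m < x i} ×ˢ {i ∈ t | ¬m < x i}).centerMass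
      (fun p ↦ w p.1 * w p.2 * (x p.1 - x p.2))
      (fun p ↦ ((m - x p.2) / (x p.1 - x p.2)) • v p.1 +
        ((x p.1 - m) / (x p.1 - x p.2)) • v p.2) := by
  rw [centerMass, sum_product_filter_mul_sub _ hw hm, eq_inv_smul_iff₀ hpos.ne',
    ← sum_product_filter_smul _ hw hm]
  refine sum_congr rfl fun p hp ↦ ?_
  simp only [mem_product, mem_filter, not_lt] at hp
  have hne : x p.1 - x p.2 ≠ 0 := (sub_pos.2 (hp.2.2.trans_lt hp.1.2)).ne'
  simp only [smul_add, smul_smul]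
  congr 2 <;> field_simp

theorem sum_smul_mem_of_forall_two_point {S : Set V} (hS : Convex 𝕜 S) {I : Set 𝕜} {F : 𝕜 → V}
    (htwo : ∀ a ∈ I, ∀ b ∈ I, ∀ α β : 𝕜, 0 ≤ α → 0 ≤ β → α + β = 1 → α * a + β * b = m →
      α • F a + β • F b ∈ S)
    (hw₀ : ∀ i ∈ t, 0 ≤ w i) (hw : ∑ i ∈ t, w i = 1) (hx : ∀ i ∈ t, x i ∈ I)
    (hm : ∑ i ∈ t, w i * x i = m) :
    ∑ i ∈ t, w i • F (x i) ∈ S := by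
  have hnonneg : 0 ≤ ∑ i ∈ t with m < x i, w i * (x i - m) := by
    refine sum_nonneg fun i hi ↦ ?_
    rw [mem_filter] at hi
    exact mul_nonneg (hw₀ i hi.1) (sub_nonneg.2 hi.2.le)
  rcases hnonneg.eq_or_lt with hzero | hpos
  · have hdirac : ∀ i ∈ t, w i = 0 ∨ x i = m := fun i hi ↦ by
      simpa only [mul_eq_zero, sub_eq_zero] using
        mul_sub_eq_zero_of_sum_filter_eq_zero hw₀ hw hm hzero.symm i hi
    obtain ⟨k, hk, hwk⟩ := exists_ne_zero_of_sum_ne_zero (hw.trans_ne one_ne_zero)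
    have hmI : m ∈ I := (hdirac k hk).resolve_left hwk ▸ hx k hk
    have hsum : ∑ i ∈ t, w i • F (x i) = F m := by
      rw [← one_smul 𝕜 (F m), ← hw, sum_smul]
      refine sum_congr rfl fun i hi ↦ ?_
      rcases hdirac i hi with h | h <;> simp only [h, zero_smul]
    simpa [hsum] using htwo m hmI m hmI 1 0 zero_le_one le_rfl (add_zero 1) (by ring)
  · rw [sum_smul_eq_centerMass_two_point hw hm hpos (fun i ↦ F (x i))]
    refine hS.centerMass_mem (fun p hp ↦ ?_)
      (hpos.trans_eq (sum_product_filter_mul_sub _ hw hm).symm) fun p hp ↦ ?_ <;>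
      simp only [mem_product, mem_filter, not_lt] at hp
    all_goals
      obtain ⟨⟨hi, hlt⟩, hj, hle⟩ := hp
      have hsub : 0 < x p.1 - x p.2 := sub_pos.2 (hle.trans_lt hlt)
    · exact mul_nonneg (mul_nonneg (hw₀ _ hi) (hw₀ _ hj)) hsub.le
    · refine htwo _ (hx _ hi) _ (hx _ hj) _ _ (div_nonneg (sub_nonneg.2 hle) hsub.le)
        (div_nonneg (sub_nonneg.2 hlt.le) hsub.le) ?_ ?_ <;> field_simp <;> ring

end TwoPoint

section Pmf

variable {Y Z V : Type*}

/-- The product `(q ⊗ q')(y, z) = q(y) q'(z)` of two pmfs. -/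
def pmfProd (q : Y → ℝ) (q' : Z → ℝ) : Y × Z → ℝ := fun p ↦ q p.1 * q' p.2

theorem AbsCont.mul_div_cancel {q r : Y → ℝ} (h : AbsCont q r) (y : Y) :
    r y * (q y / r y) = q y :=
  mul_div_cancel_of_imp' (h y)

theorem AbsCont.pmfProd {q r : Y → ℝ} {q' r' : Z → ℝ} (h : AbsCont q r) (h' : AbsCont q' r') :
    AbsCont (pmfProd q q') (pmfProd r r') := fun _ hp ↦
  (mul_eq_zero.1 hp).elim (fun hr ↦ mul_eq_zero_of_left (h _ hr) _)
    (fun hr ↦ mul_eq_zero_of_right _ (h' _ hr))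

variable [Fintype Y] [Fintype Z]

theorem IsPMF.pmfProd {q : Y → ℝ} {q' : Z → ℝ} (hq : IsPMF q) (hq' : IsPMF q') :
    IsPMF (pmfProd q q') := by
  refine ⟨fun p ↦ mul_nonneg (hq.1 _) (hq'.1 _), ?_⟩
  simp only [_root_.pmfProd, Fintype.sum_prod_type, ← Finset.mul_sum, hq'.2, mul_one, hq.2]

theorem IsPMF.sum_mul_div_eq_one {q r : Y → ℝ} (hq : IsPMF q) (hqr : AbsCont q r) :
    ∑ y, r y * (q y / r y) = 1 := by
  simp only [hqr.mul_div_cancel, hq.2]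

theorem IsPMF.exists_pos {q : Y → ℝ} (hq : IsPMF q) : ∃ y, 0 < q y := by
  obtain ⟨y, -, hy⟩ := Finset.exists_ne_zero_of_sum_ne_zero (hq.2.trans_ne one_ne_zero)
  exact ⟨y, (hq.1 y).lt_of_ne' hy⟩

theorem isPMF_fin_two {α β : ℝ} (hα : 0 ≤ α) (hβ : 0 ≤ β) (hsum : α + β = 1) :
    IsPMF ![α, β] :=
  ⟨Fin.forall_fin_two.2 ⟨hα, hβ⟩, by simpa using hsum⟩

theorem smul_mul_div_cancel_left {𝕜 : Type*} [Field 𝕜] [AddCommMonoid V] [Module 𝕜 V]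
    (F : 𝕜 → V) (α a : 𝕜) :
    α • F (α * a / α) = α • F a := by
  rcases eq_or_ne α 0 with rfl | hα
  · simp only [zero_smul]
  · rw [mul_div_cancel_left₀ a hα]

theorem sum_smul_div_mem_of_fin_two [AddCommGroup V] [Module ℝ V] {S : Set V}
    (hS : Convex ℝ S) {F : ℝ → V}
    (hbin : ∀ q r : Fin 2 → ℝ, IsPMF q → IsPMF r → AbsCont q r →
      ∑ i, r i • F (q i / r i) ∈ S)
    {q r : Y → ℝ} (hq : IsPMF q) (hr : IsPMF r) (hqr : AbsCont q r) :
    ∑ y, r y • F (q y / r y) ∈ S := by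
  refine sum_smul_mem_of_forall_two_point hS (I := Set.Ici 0) (m := 1) ?_
    (fun y _ ↦ hr.1 y) hr.2 (fun y _ ↦ div_nonneg (hq.1 y) (hr.1 y)) (hq.sum_mul_div_eq_one hqr)
  intro a ha b hb α β hα hβ hsum hmean
  have habs : AbsCont ![α * a, β * b] ![α, β] :=
    Fin.forall_fin_two.2 ⟨fun h ↦ mul_eq_zero_of_left h a, fun h ↦ mul_eq_zero_of_left h b⟩
  simpa [Fin.sum_univ_two, smul_mul_div_cancel_left] using
    hbin _ _ (isPMF_fin_two (mul_nonneg hα ha) (mul_nonneg hβ hb) hmean)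
      (isPMF_fin_two hα hβ hsum) habs

end Pmf

section FDiv

variable {Y Z : Type*} [Fintype Y] [Fintype Z] {f : ℝ → ℝ} {q r : Y → ℝ} {q' r' : Z → ℝ}

theorem fDiv_eq_sum_s7 (hr : ∀ y, 0 ≤ r y) : fDiv f q r = ∑ y, r y * f (q y / r y) := by
  refine Finset.sum_congr rfl fun y _ ↦ ite_eq_left_iff.2 fun hy ↦ ?_
  rw [(hr y).antisymm' (not_lt.1 hy), zero_mul]

theorem fDiv_pmfProd_eq_sum (hr : ∀ y, 0 ≤ r y) (hr' : ∀ z, 0 ≤ r' z) :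
    fDiv f (pmfProd q q') (pmfProd r r') =
      ∑ y, r y * ∑ z, r' z * f (q y / r y * (q' z / r' z)) := by
  have hnonneg (p : Y × Z) : 0 ≤ pmfProd r r' p := mul_nonneg (hr p.1) (hr' p.2)
  rw [fDiv_eq_sum_s7 hnonneg, Fintype.sum_prod_type]
  simp only [pmfProd, mul_div_mul_comm, mul_assoc, Finset.mul_sum]

theorem fDiv_pmfProd_comm (f : ℝ → ℝ) (q r : Y → ℝ) (q' r' : Z → ℝ) :
    fDiv f (pmfProd q q') (pmfProd r r') = fDiv f (pmfProd q' q) (pmfProd r' r) :=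
  Fintype.sum_equiv (Equiv.prodComm Y Z) _ _ fun p ↦ by
    have hswap (u : Y → ℝ) (v : Z → ℝ) : pmfProd u v p = pmfProd v u p.swap := mul_comm _ _
    rw [hswap q q', hswap r r']
    rfl

theorem sum_smul_div_eq_fDiv_pair (hr : ∀ y, 0 ≤ r y) (hr' : ∀ z, 0 ≤ r' z) :
    ∑ y, r y • (f (q y / r y), ∑ z, r' z * f (q y / r y * (q' z / r' z))) =
      (fDiv f q r, fDiv f (pmfProd q q') (pmfProd r r')) := by
  rw [fDiv_eq_sum_s7 hr, fDiv_pmfProd_eq_sum hr hr']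
  ext <;> simp only [Prod.fst_sum, Prod.snd_sum, Prod.smul_mk, smul_eq_mul]

theorem fDiv_mem_of_fin_two {s : Set ℝ} (hs : Convex ℝ s)
    (hbin : ∀ q r : Fin 2 → ℝ, IsPMF q → IsPMF r → AbsCont q r → fDiv f q r ∈ s)
    (hq : IsPMF q) (hr : IsPMF r) (hqr : AbsCont q r) : fDiv f q r ∈ s := by
  rw [fDiv_eq_sum_s7 hr.1]
  refine sum_smul_div_mem_of_fin_two hs (fun q r hq hr hqr ↦ ?_) hq hr hqr
  simpa only [fDiv_eq_sum_s7 hr.1, smul_eq_mul] using hbin q r hq hr hqr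

theorem fDiv_nonneg (hf : ConvexOn ℝ (Set.Ici 0) f) (hf1 : f 1 = 0) (hq : IsPMF q)
    (hr : IsPMF r) (hqr : AbsCont q r) : 0 ≤ fDiv f q r := by
  have hjensen := hf.map_sum_le (fun y _ ↦ hr.1 y) hr.2
    (fun y _ ↦ Set.mem_Ici.2 (div_nonneg (hq.1 y) (hr.1 y)))
  simpa only [smul_eq_mul, hq.sum_mul_div_eq_one hqr, hf1, ← fDiv_eq_sum_s7 hr.1] using hjensen

theorem le_mul_sub_one_of_Dm_le {n t : ℝ} (hDm : Dm f ≤ n) (ht : 1 < t) :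
    f t ≤ (n - f 0) * (t - 1) := by
  have hslope : (f 0 : EReal) + ((f t / (t - 1) : ℝ) : EReal) ≤ n :=
    (add_le_add_right (le_iSup
      (fun u : {u : ℝ // 1 < u} ↦ ((f u.1 / (u.1 - 1) : ℝ) : EReal)) ⟨t, ht⟩) _).trans hDm
  rw [← div_le_iff₀ (sub_pos.2 ht), le_sub_iff_add_le']
  exact_mod_cast hslope

/-- The gain `n * min 1 t` over the line `f 0 + (n - f 0) * t` is what makes `fDiv f q r < n`
strict. -/
theorem le_sub_mul_min_of_Dm_le (hf : ConvexOn ℝ (Set.Ici 0) f) (hf1 : f 1 = 0) {n t : ℝ}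
    (hDm : Dm f ≤ n) (ht : 0 ≤ t) : f t ≤ f 0 + (n - f 0) * t - n * min 1 t := by
  rcases lt_or_ge 1 t with h1 | h1
  · rw [min_eq_left h1.le]
    linarith [le_mul_sub_one_of_Dm_le hDm h1]
  · have hchord : f t ≤ (1 - t) * f 0 := by
      simpa [hf1] using hf.2 (Set.mem_Ici.2 le_rfl) (Set.mem_Ici.2 zero_le_one)
        (sub_nonneg.2 h1) ht (sub_add_cancel 1 t)
    rw [min_eq_right h1]
    linarith

theorem fDiv_lt_of_Dm_le (hf : ConvexOn ℝ (Set.Ici 0) f) (hf1 : f 1 = 0) {n : ℝ} (hn : 0 < n)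
    (hDm : Dm f ≤ n) (hq : IsPMF q) (hr : IsPMF r) (hqr : AbsCont q r) : fDiv f q r < n := by
  have hle (y : Y) : r y * f (q y / r y) ≤
      f 0 * r y + (n - f 0) * q y - n * (r y * min 1 (q y / r y)) := by
    have h := mul_le_mul_of_nonneg_left
      (le_sub_mul_min_of_Dm_le hf hf1 hDm (div_nonneg (hq.1 y) (hr.1 y))) (hr.1 y)
    linear_combination h + (n - f 0) * hqr.mul_div_cancel y
  have hmin (y : Y) : 0 ≤ r y * min 1 (q y / r y) :=
    mul_nonneg (hr.1 y) (le_min zero_le_one (div_nonneg (hq.1 y) (hr.1 y)))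
  have hmin_pos : 0 < ∑ y, r y * min 1 (q y / r y) := by
    obtain ⟨y, hqy⟩ := hq.exists_pos
    have hry : 0 < r y := (hr.1 y).lt_of_ne' fun h ↦ hqy.ne' (hqr y h)
    exact Finset.sum_pos' (fun y _ ↦ hmin y)
      ⟨y, Finset.mem_univ y, mul_pos hry (lt_min one_pos (div_pos hqy hry))⟩
  calc fDiv f q r = ∑ y, r y * f (q y / r y) := fDiv_eq_sum_s7 hr.1
    _ ≤ ∑ y, (f 0 * r y + (n - f 0) * q y - n * (r y * min 1 (q y / r y))) :=
      Finset.sum_le_sum fun y _ ↦ hle y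
    _ = n - n * ∑ y, r y * min 1 (q y / r y) := by
      rw [Finset.sum_sub_distrib, Finset.sum_add_distrib, ← Finset.mul_sum, ← Finset.mul_sum,
        ← Finset.mul_sum, hr.2, hq.2]
      ring
    _ < n := sub_lt_self n (mul_pos hn hmin_pos)

/-- The interval `[0, ν)` of real numbers, where `ν = ∞` is allowed: the domain of `G`. -/
def icoZero (ν : EReal) : Set ℝ := {x | 0 ≤ x ∧ (x : EReal) < ν}

theorem convex_icoZero (ν : EReal) : Convex ℝ (icoZero ν) :=
  Set.OrdConnected.convex
    ⟨fun _ ha _ hb _ hx ↦ ⟨ha.1.trans hx.1, (EReal.coe_le_coe_iff.2 hx.2).trans_lt hb.2⟩⟩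

theorem fDiv_mem_icoZero {ν : EReal} (hν : 0 < ν) (hf : ConvexOn ℝ (Set.Ici 0) f)
    (hf1 : f 1 = 0) (hDm : Dm f ≤ ν) (hq : IsPMF q) (hr : IsPMF r) (hqr : AbsCont q r) :
    fDiv f q r ∈ icoZero ν := by
  refine ⟨fDiv_nonneg hf hf1 hq hr hqr, ?_⟩
  induction ν with
  | bot => exact absurd hν not_lt_bot
  | top => exact EReal.coe_lt_top _
  | coe n =>
    exact EReal.coe_lt_coe (fDiv_lt_of_Dm_le hf hf1 (EReal.coe_pos.1 hν) hDm hq hr hqr)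

end FDiv

/-- The maps `x ↦ G⁻¹(G x + G c)`, `c ∈ s`, are defined and concave on `s`.  They are given by
`G (H x) = G x + G c`, so that no inverse of `G` has to be named. -/
def HasConcaveShifts (G : ℝ → ℝ) (s : Set ℝ) : Prop :=
  ∀ c ∈ s, ∃ H : ℝ → ℝ, ConcaveOn ℝ s H ∧ ∀ x ∈ s, H x ∈ s ∧ G (H x) = G x + G c

theorem hasConcaveShifts_of_inverse {s : Set ℝ} {G Ginv : ℝ → ℝ} (hs : Convex ℝ s)
    (hleast : IsLeast s 0) (hG : MonotoneOn G s) (hG0 : G 0 = 0)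
    (hleft : ∀ x ∈ s, Ginv (G x) = x) (hright : ∀ y, 0 ≤ y → G (Ginv y) = y ∧ Ginv y ∈ s)
    (hconc : ∀ c ∈ s, 0 < c → ConcaveOn ℝ s fun x ↦ Ginv (G x + G c)) :
    HasConcaveShifts G s := by
  have hnonneg (x : ℝ) (hx : x ∈ s) : 0 ≤ G x := hG0 ▸ hG hleast.1 hx (hleast.2 hx)
  intro c hc
  refine ⟨fun x ↦ Ginv (G x + G c), ?_, fun x hx ↦
    (hright _ (add_nonneg (hnonneg x hx) (hnonneg c hc))).symm⟩
  rcases (hleast.2 hc).eq_or_lt with rfl | hpos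
  · refine (concaveOn_id hs).congr fun x hx ↦ ?_
    rw [hG0, add_zero, hleft x hx, id]
  · exact hconc c hc hpos

/-- The inequality `G(D_f(q_Y⊗q_Z‖r_Y⊗r_Z)) ≤ G(D_f(q_Y‖r_Y)) + G(D_f(q_Z‖r_Z))` for all pmfs
`q_Y ≪ r_Y` on `Y` and `q_Z ≪ r_Z` on `Z`. -/
def DivSubadditive (G f : ℝ → ℝ) (Y Z : Type*) [Fintype Y] [Fintype Z] : Prop :=
  ∀ (qY rY : Y → ℝ) (qZ rZ : Z → ℝ),
    IsPMF qY → IsPMF rY → IsPMF qZ → IsPMF rZ → AbsCont qY rY → AbsCont qZ rZ →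
    G (fDiv f (pmfProd qY qZ) (pmfProd rY rZ)) ≤ G (fDiv f qY rY) + G (fDiv f qZ rZ)

section Subadditive

variable {G f : ℝ → ℝ} {s : Set ℝ} {Y Z : Type*} [Fintype Y] [Fintype Z]

theorem DivSubadditive.symm (h : DivSubadditive G f Y Z) : DivSubadditive G f Z Y := by
  intro qZ rZ qY rY hqZ hrZ hqY hrY hZ hY
  rw [fDiv_pmfProd_comm, add_comm]
  exact h qY rY qZ rZ hqY hrY hqZ hrZ hY hZ

theorem fDiv_pmfProd_le_of_fin_two {H : ℝ → ℝ} (hH : ConcaveOn ℝ s H) {qZ rZ : Z → ℝ}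
    (hrZ : ∀ z, 0 ≤ rZ z)
    (hbin : ∀ q r : Fin 2 → ℝ, IsPMF q → IsPMF r → AbsCont q r →
      fDiv f q r ∈ s ∧ fDiv f (pmfProd q qZ) (pmfProd r rZ) ≤ H (fDiv f q r))
    {qY rY : Y → ℝ} (hqY : IsPMF qY) (hrY : IsPMF rY) (hY : AbsCont qY rY) :
    fDiv f (pmfProd qY qZ) (pmfProd rY rZ) ≤ H (fDiv f qY rY) := by
  have hpair := sum_smul_div_mem_of_fin_two hH.convex_hypograph
    (F := fun t ↦ (f t, ∑ z, rZ z * f (t * (qZ z / rZ z))))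
    (fun q r hq hr hqr ↦ by
      rw [sum_smul_div_eq_fDiv_pair hr.1 hrZ]
      exact hbin q r hq hr hqr)
    hqY hrY hY
  rw [sum_smul_div_eq_fDiv_pair hrY.1 hrZ] at hpair
  exact hpair.2

theorem fDiv_pmfProd_le_shift_iff (hs : Convex ℝ s) (hG : StrictMonoOn G s)
    (hmem : ∀ q r : Fin 2 → ℝ, IsPMF q → IsPMF r → AbsCont q r → fDiv f q r ∈ s)
    {H : ℝ → ℝ} {c : ℝ} (hGH : ∀ x ∈ s, H x ∈ s ∧ G (H x) = G x + c)
    {qY rY : Y → ℝ} {qZ rZ : Z → ℝ} (hqY : IsPMF qY) (hrY : IsPMF rY) (hqZ : IsPMF qZ)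
    (hrZ : IsPMF rZ) (hY : AbsCont qY rY) (hZ : AbsCont qZ rZ) :
    fDiv f (pmfProd qY qZ) (pmfProd rY rZ) ≤ H (fDiv f qY rY) ↔
      G (fDiv f (pmfProd qY qZ) (pmfProd rY rZ)) ≤ G (fDiv f qY rY) + c := by
  obtain ⟨hHmem, hGHeq⟩ := hGH _ (fDiv_mem_of_fin_two hs hmem hqY hrY hY)
  have hprod := fDiv_mem_of_fin_two hs hmem (hqY.pmfProd hqZ) (hrY.pmfProd hrZ) (hY.pmfProd hZ)
  rw [← hGHeq, hG.le_iff_le hprod hHmem]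

theorem DivSubadditive.of_fin_two_left (hs : Convex ℝ s) (hG : StrictMonoOn G s)
    (hshift : HasConcaveShifts G s)
    (hmem : ∀ q r : Fin 2 → ℝ, IsPMF q → IsPMF r → AbsCont q r → fDiv f q r ∈ s)
    (hbin : DivSubadditive G f (Fin 2) Z) : DivSubadditive G f Y Z := by
  intro qY rY qZ rZ hqY hrY hqZ hrZ hY hZ
  obtain ⟨H, hH, hGH⟩ := hshift _ (fDiv_mem_of_fin_two hs hmem hqZ hrZ hZ)
  rw [← fDiv_pmfProd_le_shift_iff hs hG hmem hGH hqY hrY hqZ hrZ hY hZ]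
  refine fDiv_pmfProd_le_of_fin_two hH hrZ.1 (fun q r hq hr hqr ↦ ⟨hmem q r hq hr hqr, ?_⟩)
    hqY hrY hY
  rw [fDiv_pmfProd_le_shift_iff hs hG hmem hGH hq hr hqZ hrZ hqr hZ]
  exact hbin q r qZ rZ hq hr hqZ hrZ hqr hZ

end Subadditive

theorem divSubadditive_binary_reduction_general {s : Set ℝ} {G f : ℝ → ℝ}
    (hs : Convex ℝ s) (hG : StrictMonoOn G s) (hshift : HasConcaveShifts G s)
    (hmem : ∀ q r : Fin 2 → ℝ, IsPMF q → IsPMF r → AbsCont q r → fDiv f q r ∈ s)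
    (hbin : DivSubadditive G f (Fin 2) (Fin 2))
    (Y Z : Type*) [Fintype Y] [Fintype Z] : DivSubadditive G f Y Z :=
  have hleft : DivSubadditive G f Y (Fin 2) := hbin.of_fin_two_left hs hG hshift hmem
  (hleft.symm.of_fin_two_left hs hG hshift hmem).symm

/-- Binary reduction for divergence subadditivity.  Let `G : [0,ν) → [0,∞)` be
increasing with `G 0 = 0` and range all of `[0,∞)`, with inverse `Ginv`, such that
for every `c > 0` in the domain the map `x ↦ G⁻¹(G x + G c)` is concave on `[0,ν)`.
Let `f` be convex with `f 1 = 0` and `D_m(f) ≤ ν`.  If the subadditivity inequality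
holds on binary alphabets, then it holds on arbitrary finite alphabets. -/
theorem divSubadditive_binary_reduction
    (ν : EReal) (hν : 0 < ν) (G Ginv f : ℝ → ℝ)
    (hGmono : StrictMonoOn G {x : ℝ | 0 ≤ x ∧ (x : EReal) < ν})
    (hG0 : G 0 = 0)
    (hGrange : G '' {x : ℝ | 0 ≤ x ∧ (x : EReal) < ν} = Set.Ici 0)
    (hGinv_left : ∀ x : ℝ, 0 ≤ x → (x : EReal) < ν → Ginv (G x) = x)
    (hGinv_right : ∀ y : ℝ, 0 ≤ y →
      G (Ginv y) = y ∧ 0 ≤ Ginv y ∧ ((Ginv y : ℝ) : EReal) < ν)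
    (hconc : ∀ c : ℝ, 0 < c → (c : EReal) < ν →
      ConcaveOn ℝ {x : ℝ | 0 ≤ x ∧ (x : EReal) < ν} (fun x => Ginv (G x + G c)))
    (hconv : ConvexOn ℝ (Set.Ici 0) f) (hf1 : f 1 = 0)
    (hDm : Dm f ≤ ν)
    (hbin : ∀ (qY rY qZ rZ : Fin 2 → ℝ),
      IsPMF qY → IsPMF rY → IsPMF qZ → IsPMF rZ → AbsCont qY rY → AbsCont qZ rZ →
      G (fDiv f (fun p : Fin 2 × Fin 2 => qY p.1 * qZ p.2)
                (fun p : Fin 2 × Fin 2 => rY p.1 * rZ p.2)) ≤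
        G (fDiv f qY rY) + G (fDiv f qZ rZ)) :
    ∀ (Y Z : Type) [Fintype Y] [Fintype Z] (qY rY : Y → ℝ) (qZ rZ : Z → ℝ),
      IsPMF qY → IsPMF rY → IsPMF qZ → IsPMF rZ → AbsCont qY rY → AbsCont qZ rZ →
      G (fDiv f (fun p : Y × Z => qY p.1 * qZ p.2)
                (fun p : Y × Z => rY p.1 * rZ p.2)) ≤
        G (fDiv f qY rY) + G (fDiv f qZ rZ) :=
  have hconvex : Convex ℝ (icoZero ν) := convex_icoZero ν
  have hleast : IsLeast (icoZero ν) 0 := ⟨⟨le_rfl, hν⟩, fun _ hx ↦ hx.1⟩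
  fun Y Z _ _ ↦ divSubadditive_binary_reduction_general hconvex hGmono
    (hasConcaveShifts_of_inverse hconvex hleast hGmono.monotoneOn hG0
      (fun x hx ↦ hGinv_left x hx.1 hx.2) hGinv_right fun c hc hpos ↦ hconc c hpos hc.2)
    (fun _ _ hq hr hqr ↦ fDiv_mem_icoZero hν hconv hf1 hDm hq hr hqr) hbin Y Z
end
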